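/- Let κ be a regular uncountable cardinal which is κ-compact, i.e., has the κ-filter extension property, and let ρ < κ be a cardinal. Then RC(ρ, <κ, κ⁺) holds: for every tree T of cardinality κ⁺, if every subtree T' ⊆ T of cardinality less than κ is ρ-special, then T is ρ-special. -/

import Mathlib

open Cardinal

/-- A filter `F` is `κ`-complete if it is closed under intersections of fewer than `κ`
of its members. -/
def IsKappaComplete (κ : Cardinal.{u}) {β : Type u} (F : Filter β) : Prop :=
  ∀ S : Set (Set β), #S < κ → S ⊆ F.sets → ⋂₀ S ∈ F

/-- `κ` has the `lam`-filter extension property if every `κ`-complete (proper) filter on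
a set of size `lam` extends to a `κ`-complete ultrafilter. -/
def HasFilterExt (κ lam : Cardinal.{u}) : Prop :=
  ∀ (β : Type u), #β = lam → ∀ F : Filter β, F.NeBot → IsKappaComplete κ F →
    ∃ U : Ultrafilter β, (U : Filter β) ≤ F ∧ IsKappaComplete κ (U : Filter β)

/-- A partially ordered set is `ρ`-special if it is the union of at most `ρ` many
antichains (sets of pairwise incomparable elements). -/
def IsSpecialTree (T : Type u) [Preorder T] (ρ : Cardinal.{u}) : Prop :=
  ∃ (ι : Type u) (_ : #ι ≤ ρ) (f : ι → Set T),
    (∀ i, IsAntichain (· ≤ ·) (f i)) ∧ ⋃ i, f i = Set.univ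

/-!
Let `f t`, for `t : T`, be a `κ`-independent family of functions from a set of size `κ` to the `ρ`
colours: any prescription of colours on fewer than `κ` nodes `t` is realised as `t ↦ f t b` for some
point `b`. Such a family exists for `2 ^ κ` many nodes because `κ` is a strong limit, and `κ` is a
strong limit because it carries a nonprincipal `κ`-complete ultrafilter. For comparable nodes
`x ≠ y`, consider the set of points `b` with `f x b ≠ f y b`. Since small subtrees are special,
fewer than `κ` of these sets always have a common point, so all of them belong to a single
`κ`-complete ultrafilter. There are fewer than `κ` colours, so each `f t` is constant on a set in
the ultrafilter, and assigning that constant to `t` colours all of `T`.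
-/

section Ultrafilter

variable {κ lam : Cardinal.{u}} {β : Type u}

lemma isKappaComplete_iff_cardinalInterFilter {F : Filter β} :
    IsKappaComplete κ F ↔ CardinalInterFilter F κ :=
  ⟨fun h => ⟨h⟩, fun h => h.cardinal_sInter_mem⟩

lemma HasFilterExt.exists_ultrafilter_forall_mem (hκ : κ.IsRegular) (hext : HasFilterExt κ lam)
    (hβ : #β = lam) {ι : Type u} {G : ι → Set β}
    (hG : ∀ J : Set ι, #J < κ → (⋂ i ∈ J, G i).Nonempty) :
    ∃ U : Ultrafilter β, CardinalInterFilter (U : Filter β) κ ∧ ∀ i, G i ∈ U := by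
  let F := Filter.cardinalGenerate (Set.range G) (hκ.nat_lt 2)
  have hF : CardinalInterFilter F κ := Filter.cardinalInter_ofCardinalGenerate _ _
  have hF_neBot : F.NeBot := by
    rw [Filter.neBot_iff, Ne, ← Filter.empty_mem_iff_bot,
      Filter.mem_cardinalGenerate_iff (hreg := hκ)]
    rintro ⟨S, hSG, hS, hS_empty⟩
    obtain ⟨J, rfl, hJ⟩ := Set.exists_image_eq_injOn_of_subset_range hSG
    rw [mk_image_eq_of_injOn _ _ hJ] at hS
    rw [Set.sInter_image] at hS_empty
    exact (hG J hS).not_subset_empty hS_empty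
  obtain ⟨U, hUF, hU⟩ :=
    hext β hβ F hF_neBot (isKappaComplete_iff_cardinalInterFilter.2 hF)
  exact ⟨U, isKappaComplete_iff_cardinalInterFilter.1 hU,
    fun i => hUF (Filter.CardinalGenerateSets.basic ⟨i, rfl⟩)⟩

variable {U : Ultrafilter β} [CardinalInterFilter (U : Filter β) κ]

lemma eventually_forall_iff_eventually {ι : Type u} (hι : #ι < κ) (p : ι → β → Prop) :
    ∀ᶠ b in U, ∀ i, p i b ↔ ∀ᶠ b' in U, p i b' := by
  rw [Filter.eventually_cardinal_forall hι]
  intro i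
  by_cases hi : ∀ᶠ b in U, p i b
  · simp only [hi, iff_true]
  · simpa only [hi, iff_false] using Ultrafilter.eventually_not.2 hi

lemma exists_eventually_eq_const {C : Type u} (hC : #C < κ) (f : β → C) :
    ∃ c, ∀ᶠ b in U, f b = c := by
  obtain ⟨b, hb⟩ := (eventually_forall_iff_eventually (U := U) hC fun c b => f b = c).exists
  exact ⟨f b, (hb (f b)).1 rfl⟩

lemma exists_eventually_eq_of_injective {M : Type u} (hM : #M < κ) {e : β → Set M}
    (he : Function.Injective e) : ∃ b₀, ∀ᶠ b in (U : Filter β), b = b₀ := by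
  have heq : ∀ᶠ b in U, e b = {m | ∀ᶠ b' in U, m ∈ e b'} :=
    (eventually_forall_iff_eventually hM fun m b => m ∈ e b).mono fun _ => Set.ext
  obtain ⟨b₀, hb₀⟩ := heq.exists
  exact ⟨b₀, heq.mono fun b hb => he (hb.trans hb₀.symm)⟩

lemma HasFilterExt.two_power_lt (hκ : κ.IsRegular) (hext : HasFilterExt κ lam) (hle : κ ≤ lam)
    {μ : Cardinal.{u}} (hμ : μ < κ) : 2 ^ μ < lam := by
  by_contra! hlam
  obtain ⟨e⟩ : #lam.out ≤ #(Set μ.out) := by simpa only [mk_set, mk_out] using hlam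
  obtain ⟨U, hU, hU_ne⟩ := hext.exists_ultrafilter_forall_mem hκ (mk_out lam)
    (G := fun b => {b}ᶜ) fun J hJ => by
      have hJ_ne : J ≠ Set.univ := by
        rintro rfl
        rw [mk_univ, mk_out] at hJ
        exact hJ.not_ge hle
      simpa only [← Set.compl_iUnion₂, Set.biUnion_of_singleton, Set.nonempty_compl] using hJ_ne
  obtain ⟨b₀, hb₀⟩ :=
    exists_eventually_eq_of_injective (U := U) (by rwa [mk_out]) e.injective
  exact Ultrafilter.compl_notMem_iff.2 hb₀ (hU_ne b₀)

end Ultrafilter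

section IndependentFamily

/-- A family of functions `f t : β → C` is `κ`-independent, in the sense of Engelking and Karłowicz,
if any assignment of values to fewer than `κ` of the indices is realised at a single point of
`β`. -/
def IsIndependentFamily (κ : Cardinal.{u}) {T : Type u} {β : Type v} {C : Type w}
    (f : T → β → C) : Prop :=
  ∀ A : Set T, #A < κ → ∀ g : A → C, ∃ b, ∀ t : A, f t b = g t

lemma exists_injOn_preimage_Iio {K : Type u} [LinearOrder K] (hK : ℵ₀ ≤ Order.cof K)
    {𝒜 : Set (Set K)} (h𝒜 : #𝒜 < Order.cof K) :
    ∃ a : K, 𝒜.InjOn fun X => ((↑) ⁻¹' X : Set (Set.Iio a)) := by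
  have : Nonempty K := Order.cof_ne_zero_iff.1 (aleph0_pos.trans_le hK).ne'
  have hdiff : ∀ X Y : Set K, X ≠ Y → (symmDiff X Y).Nonempty := fun _ _ =>
    Set.symmDiff_nonempty.2
  choose! d hd using hdiff
  have hD : #(Set.image2 d 𝒜 𝒜) < Order.cof K :=
    mk_image2_le.trans_lt (mul_lt_of_lt hK h𝒜 h𝒜)
  obtain ⟨a, ha⟩ := not_isCofinal_iff.1 fun hcof => (Order.cof_le hcof).not_gt hD
  refine ⟨a, fun X hX Y hY hXY => ?_⟩
  by_contra hne
  have hmem := Set.ext_iff.1 hXY ⟨d X Y, ha _ (Set.mem_image2_of_mem hX hY)⟩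
  grind

lemma power_lt_of_isStrongLimit {κ μ ν : Cardinal.{u}} (hκ : κ.IsStrongLimit) (hμ : μ < κ)
    (hν : ν < κ) : μ ^ ν < κ :=
  calc μ ^ ν ≤ (2 ^ μ) ^ ν := power_le_power_right (cantor μ).le
    _ = 2 ^ (μ * ν) := (power_mul ..).symm
    _ < κ := hκ.isStrongPrelimit (mul_lt_of_lt hκ.aleph0_le hμ hν)

lemma mk_sigma_set_Iio_arrow {κ : Cardinal.{u}} (hκ : κ.IsStrongLimit) {C : Type u} [Nonempty C]
    (hC : #C < κ) : #(Σ a : κ.ord.ToType, (Set (Set.Iio a) → C)) = κ := by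
  have hfiber (a : κ.ord.ToType) : #(Set (Set.Iio a) → C) ≤ κ := by
    have ha : #(Set.Iio a) < κ := by simpa using mk_Iio_lt a
    rw [← power_def, mk_set]
    exact (power_lt_of_isStrongLimit hκ hC (hκ.isStrongPrelimit ha)).le
  rw [mk_sigma]
  refine le_antisymm ?_ ?_
  · calc
      _ ≤ sum fun _ : κ.ord.ToType => κ := sum_le_sum _ _ hfiber
      _ = κ := by rw [sum_const', mk_ord_toType, mul_eq_self hκ.aleph0_le]
  · calc
      κ = sum fun _ : κ.ord.ToType => 1 := by rw [sum_const', mk_ord_toType, mul_one]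
      _ ≤ _ := sum_le_sum _ _ fun _ => Cardinal.one_le_iff_ne_zero.2 (mk_ne_zero _)

theorem exists_isIndependentFamily {κ : Cardinal.{u}} (hreg : κ.IsRegular)
    (hlim : κ.IsStrongLimit) {T C : Type u} (hT : #T ≤ 2 ^ κ) [Nonempty C] (hC : #C < κ) :
    ∃ (β : Type u) (f : T → β → C), #β = κ ∧ IsIndependentFamily κ f := by
  let K := κ.ord.ToType
  have hcof : Order.cof K = κ := by rw [Ordinal.cof_toType, hreg.cof_ord]
  obtain ⟨e⟩ : #T ≤ #(Set K) := by rwa [mk_set, mk_ord_toType]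
  -- Hausdorff's construction: a point is a function on the subsets of an initial segment of `K`,
  -- and `t` evaluates it at the trace of `e t` on that segment.
  refine ⟨Σ a : K, (Set (Set.Iio a) → C), fun t b => b.2 ((↑) ⁻¹' e t),
    mk_sigma_set_Iio_arrow hlim hC, fun A hA g => ?_⟩
  obtain ⟨a, ha⟩ := exists_injOn_preimage_Iio (hreg.aleph0_le.trans_eq hcof.symm)
    (𝒜 := e '' A) (by rw [hcof]; exact mk_image_le.trans_lt hA)
  let trace : A → Set (Set.Iio a) := fun t => (↑) ⁻¹' e t
  have htrace : Function.Injective trace := fun t t' h => Subtype.ext <| e.injective <|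
    ha (Set.mem_image_of_mem e t.2) (Set.mem_image_of_mem e t'.2) h
  let fallback : Set (Set.Iio a) → C := fun _ => Classical.arbitrary C
  exact ⟨⟨a, Function.extend trace g fallback⟩, htrace.extend_apply g fallback⟩

end IndependentFamily

section RelHom

variable {κ lam : Cardinal.{u}} {T C : Type u} {r : T → T → Prop} {s : C → C → Prop}

lemma IsIndependentFamily.nonempty_relHom (hκ : κ.IsRegular) (hext : HasFilterExt κ lam)
    {β : Type u} (hβ : #β = lam) {f : T → β → C} (hf : IsIndependentFamily κ f) (hC : #C < κ)
    (hsmall : ∀ A : Set T, #A < κ → Nonempty (Subrel r (· ∈ A) →r s)) : Nonempty (r →r s) := by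
  obtain ⟨U, hU, hU_mem⟩ := hext.exists_ultrafilter_forall_mem hκ hβ
    (G := fun p : {p : T × T // r p.1 p.2} => {b | s (f p.1.1 b) (f p.1.2 b)}) fun J hJ => by
      let A : Set T := (fun p => p.1.1) '' J ∪ (fun p => p.1.2) '' J
      have hA : #A < κ := (mk_union_le _ _).trans_lt <|
        add_lt_of_lt hκ.aleph0_le (mk_image_le.trans_lt hJ) (mk_image_le.trans_lt hJ)
      obtain ⟨g⟩ := hsmall A hA
      obtain ⟨b, hb⟩ := hf A hA g
      refine ⟨b, Set.mem_iInter₂.2 fun p hp => ?_⟩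
      have hx : p.1.1 ∈ A := .inl ⟨p, hp, rfl⟩
      have hy : p.1.2 ∈ A := .inr ⟨p, hp, rfl⟩
      have hs : s (g ⟨_, hx⟩) (g ⟨_, hy⟩) := g.map_rel p.2
      rwa [← hb ⟨_, hx⟩, ← hb ⟨_, hy⟩] at hs
  choose c hc using fun t => exists_eventually_eq_const (U := U) hC (f t)
  refine ⟨⟨c, fun {x y} hxy => ?_⟩⟩
  obtain ⟨b, ⟨hbx, hby⟩, hb⟩ := (((hc x).and (hc y)).and (hU_mem ⟨(x, y), hxy⟩)).exists
  rwa [← hbx, ← hby]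

theorem HasFilterExt.nonempty_relHom (hκ : κ.IsRegular) (hext : HasFilterExt κ κ)
    (hT : #T ≤ 2 ^ κ) (hC : #C < κ)
    (hsmall : ∀ A : Set T, #A < κ → Nonempty (Subrel r (· ∈ A) →r s)) : Nonempty (r →r s) := by
  have hlim : κ.IsStrongLimit := ⟨hκ.ne_zero, fun _ => hext.two_power_lt hκ le_rfl⟩
  cases isEmpty_or_nonempty T with
  | inl _ => exact ⟨⟨isEmptyElim, fun {x} => isEmptyElim x⟩⟩
  | inr hT_ne =>
    obtain ⟨t⟩ := hT_ne
    obtain ⟨g⟩ := hsmall {t} (by simpa only [mk_singleton, Nat.cast_one] using hκ.nat_lt 1)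
    have : Nonempty C := ⟨g ⟨t, rfl⟩⟩
    obtain ⟨β, f, hβ, hf⟩ := exists_isIndependentFamily hκ hlim hT hC
    exact hf.nonempty_relHom hκ hext hβ hC hsmall

end RelHom

lemma isSpecialTree_iff_nonempty_relHom {T : Type u} [Preorder T] {ρ : Cardinal.{u}} :
    IsSpecialTree T ρ ↔
      Nonempty ((fun x y : T => x ≠ y ∧ x ≤ y) →r ((· ≠ ·) : ρ.out → ρ.out → Prop)) := by
  constructor
  · rintro ⟨ι, hι, f, hanti, hcover⟩
    obtain ⟨e⟩ : #ι ≤ #ρ.out := by rwa [mk_out]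
    choose i hi using Set.iUnion_eq_univ_iff.1 hcover
    refine ⟨⟨e ∘ i, fun {x y} hxy heq => ?_⟩⟩
    have hiy : y ∈ f (i x) := e.injective heq ▸ hi y
    exact hanti (i x) (hi x) hiy hxy.1 hxy.2
  · rintro ⟨c⟩
    refine ⟨ρ.out, (mk_out ρ).le, fun i => c ⁻¹' {i}, fun i x hx y hy hne hle => ?_,
      Set.iUnion_eq_univ_iff.2 fun x => ⟨c x, rfl⟩⟩
    exact c.map_rel ⟨hne, hle⟩ (hx.trans hy.symm)

theorem statement14_general {κ : Cardinal.{u}} (hreg : κ.IsRegular) (hcompact : HasFilterExt κ κ)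
    {ρ : Cardinal.{u}} (hρ : ρ < κ) {T : Type u} [Preorder T] (hT : #T ≤ 2 ^ κ)
    (hsub : ∀ T' : Set T, #T' < κ → IsSpecialTree (↥T') ρ) :
    IsSpecialTree T ρ := by
  refine isSpecialTree_iff_nonempty_relHom.2 ?_
  refine hcompact.nonempty_relHom hreg hT (by rwa [mk_out]) fun A hA => ?_
  obtain ⟨c⟩ := isSpecialTree_iff_nonempty_relHom.1 (hsub A hA)
  exact ⟨⟨c, fun {x y} hxy => c.map_rel ⟨ne_of_apply_ne _ hxy.1, hxy.2⟩⟩⟩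

/-- **RC(ρ, <κ, κ⁺).**  Let `κ` be a regular uncountable cardinal which is `κ`-compact,
i.e. has the `κ`-filter extension property, and let `ρ < κ` be a cardinal.  If `T` is a
tree (a partial order in which the predecessors of every element are well-ordered) of
cardinality `κ⁺` such that every subtree of cardinality less than `κ` is `ρ`-special,
then `T` is `ρ`-special. -/
theorem statement14 (κ : Cardinal.{u})
    (hreg : κ.IsRegular) (hunc : ℵ₀ < κ)
    (hcompact : HasFilterExt κ κ)
    (ρ : Cardinal.{u}) (hρ : ρ < κ)
    (T : Type u) [PartialOrder T]
    (htree : ∀ t : T, IsWellOrder {s : T // s < t} (· < ·))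
    (hcard : #T = Order.succ κ)
    (hsub : ∀ T' : Set T, #T' < κ → IsSpecialTree (↥T') ρ) :
    IsSpecialTree T ρ :=
  statement14_general hreg hcompact hρ (hcard.trans_le (Order.succ_le_of_lt (cantor κ))) hsub
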